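/- Let m₁, m₂ ≥ 1 be integers, q₀ ∈ [1, ∞], and 1 < p, q < ∞ with p' = p/(p−1). Let u : ℝ → [0,∞) and v : (0,∞) → (0,∞) be measurable with u^q locally integrable with respect to |c(λ)|^{−2} dλ and v^{−p'} locally integrable with respect to Δ(t) dt on [0,∞). Suppose there is a constant C > 0 such that for every measurable f : (0,∞) → [0,∞) vanishing outside a bounded set, with ∫₀^{∞} (v(t) f(t))^p Δ(t) dt < ∞ and with t ↦ f(t) Φ(iρ_{q₀}, t) Δ(t) integrable, one has ( ∫_{ℝ} u(λ)^q | ∫₀^{∞} f(t) Φ(λ + iρ_{q₀}, t) Δ(t) dt |^q |c(λ)|^{−2} dλ )^{1/q} ≤ C ( ∫₀^{∞} (v(t) f(t))^p Δ(t) dt )^{1/p}. Then for every κ ∈ ℝ and every fixed θ₀ with 0 < θ₀ < π/2, sup_{s>0} ( ∫₀^{θ₀/s} u(λ)^q |c(λ)|^{−2} dλ )^{1/q} · ( ∫₀^{s} v(t)^{−p'} Φ(iρ_{q₀}, t)^{κ p} Δ(t) dt )^{−1/p} · ( ∫₀^{s} v(t)^{−p'} Φ(iρ_{q₀}, t)^{κ+1}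 Δ(t) dt ) < ∞. -/

import Mathlib

open Set intervalIntegral MeasureTheory ENNReal

/-- The density `Δ(t) = (2 sinh t)^{m₁+m₂} (2 cosh t)^{m₂}`. -/
noncomputable def Δ (m₁ m₂ : ℕ) (t : ℝ) : ℝ :=
  (2 * Real.sinh t) ^ (m₁ + m₂) * (2 * Real.cosh t) ^ m₂

/-- The constant `c₀ = √π 2^{m₂/2-2} Γ((n-1)/2)/Γ(n/2)`, `n = m₁+m₂+1`. -/
noncomputable def c₀ (m₁ m₂ : ℕ) : ℝ :=
  Real.sqrt Real.pi * 2 ^ ((m₂ : ℝ)/2 - 2) *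
    Real.Gamma (((m₁ : ℝ) + m₂ + 1 - 1)/2) / Real.Gamma (((m₁ : ℝ) + m₂ + 1)/2)

/-- The half-sum of positive roots `ρ = (m₁ + 2m₂)/2`. -/
noncomputable def ρ₀ (m₁ m₂ : ℕ) : ℝ := ((m₁ : ℝ) + 2 * m₂) / 2

/-- `ρ_p = (2/p - 1) ρ` for `p ∈ [1,∞]` (for `p = ∞` this is `-ρ`). -/
noncomputable def rhoP (m₁ m₂ : ℕ) (p : ENNReal) : ℝ := (2 / p.toReal - 1) * ρ₀ m₁ m₂

/-- The Koornwinder integral representation of the elementary spherical function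
`φ_z(a_t)`, `z ∈ ℂ`. -/
noncomputable def PhiC (m₁ m₂ : ℕ) (z : ℂ) (t : ℝ) : ℂ :=
  ((c₀ m₁ m₂ * Real.sinh (2*t) / Δ m₁ m₂ t : ℝ) : ℂ) *
    ∫ s in (0:ℝ)..t,
      (((Real.cosh (2*t) - Real.cosh (2*s)) ^ ((m₂ : ℝ)/2 - 1) : ℝ) : ℂ) *
      (∫ r in (0:ℝ)..s,
        (((Real.cosh s - Real.cosh r) ^ ((m₁ : ℝ)/2 - 1) : ℝ) : ℂ) * Complex.cos (z * r)) *
      ((Real.sinh s : ℝ) : ℂ)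

/-- The Harish-Chandra `c`-function. -/
noncomputable def cHC (m₁ m₂ : ℕ) (lam : ℝ) : ℂ :=
  (2 : ℂ) ^ ((ρ₀ m₁ m₂ : ℂ) - Complex.I * lam) *
      Complex.Gamma (((m₁ : ℂ) + m₂ + 1) / 2) * Complex.Gamma (Complex.I * lam) /
    (Complex.Gamma (((ρ₀ m₁ m₂ : ℂ) + Complex.I * lam) / 2) *
      Complex.Gamma (((m₁ : ℂ) + 2) / 4 + Complex.I * lam / 2))

/-- The Plancherel density `|c(λ)|⁻²`. -/
noncomputable def densHC (m₁ m₂ : ℕ) (lam : ℝ) : ℝ := ‖cHC m₁ m₂ lam‖ ^ (-2 : ℤ)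

/-!
Fix `θ₀ < π/2` and let `0 < λ < θ₀/s`. For `0 < r < t < s` one has
`Re cos ((λ + iη) r) = cos (λr) cosh (ηr) ≥ cos θ₀ cosh (ηr)`, while `|cos ((λ + iη) r)|` is at most
`cosh (ηr) = cos (iηr)`. The kernels in the Koornwinder formula are positive, so both bounds survive
the two integrations: `Re Φ(λ + iη, t) ≥ cos θ₀ Φ(iη, t)` and `|Φ(λ + iη, t)| ≤ Φ(iη, t)`. Hence the
transform of a nonnegative function supported in `(0, s)` suffers no cancellation at such `λ`, and
testing the inequality on `f = v^{-p'} Φ(iη, ·)^κ` on `(0, s)` gives the claim, with constant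
`C / cos θ₀`, because `(v f)^p = v^{-p'} Φ(iη, ·)^{κp}` and `f Φ(iη, ·) = v^{-p'} Φ(iη, ·)^{κ+1}`.
-/

section ParametricIntegral

variable {α E : Type*} [MeasurableSpace α] [NormedAddCommGroup E] [NormedSpace ℝ E]

theorem stronglyMeasurable_intervalIntegral {F : α → ℝ → E} {a b : α → ℝ}
    (hF : StronglyMeasurable (Function.uncurry F)) (ha : Measurable a) (hb : Measurable b) :
    StronglyMeasurable fun x => ∫ r in a x..b x, F x r := by
  have setIntegral_Ioc : ∀ {a b : α → ℝ}, Measurable a → Measurable b →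
      StronglyMeasurable fun x => ∫ r in Ioc (a x) (b x), F x r := by
    intro a b ha hb
    have hS : MeasurableSet {x : α × ℝ | a x.1 < x.2 ∧ x.2 ≤ b x.1} :=
      (measurableSet_lt (ha.comp measurable_fst) measurable_snd).inter
        (measurableSet_le measurable_snd (hb.comp measurable_fst))
    simp_rw [← MeasureTheory.integral_indicator measurableSet_Ioc]
    exact (hF.indicator hS).integral_prod_right'
  exact (setIntegral_Ioc ha hb).sub (setIntegral_Ioc hb ha)

end ParametricIntegral

section DiskCap

/-- The cap `{z | c * h ≤ Re z}` of the closed disk of radius `h` about `0`: membership says that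
`z` is dominated by `h` and stays in a fixed sector around the positive real axis, a property that
survives integration. -/
def diskCap (c h : ℝ) : Set ℂ := {z | c * h ≤ z.re ∧ ‖z‖ ≤ h}

variable {X : Type*} [MeasurableSpace X] {μ : Measure X} {c h : ℝ} {z : ℂ}

theorem ofReal_mul_mem_diskCap {a : ℝ} (ha : 0 ≤ a) (hz : z ∈ diskCap c h) :
    a * z ∈ diskCap c (a * h) := by
  constructor
  · rw [Complex.re_ofReal_mul, mul_left_comm]
    exact mul_le_mul_of_nonneg_left hz.1 ha
  · rw [norm_mul, Complex.norm_of_nonneg ha]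
    exact mul_le_mul_of_nonneg_left hz.2 ha

theorem integral_mem_diskCap {f : X → ℂ} {g : X → ℝ} (hf : Integrable f μ) (hg : Integrable g μ)
    (hfg : ∀ᵐ x ∂μ, f x ∈ diskCap c (g x)) : ∫ x, f x ∂μ ∈ diskCap c (∫ x, g x ∂μ) := by
  refine ⟨?_, norm_integral_le_of_norm_le hg (hfg.mono fun _ hx => hx.2)⟩
  calc c * ∫ x, g x ∂μ = ∫ x, c * g x ∂μ := (integral_const_mul c g).symm
    _ ≤ ∫ x, (f x).re ∂μ := integral_mono_ae (hg.const_mul c) hf.re (hfg.mono fun _ hx => hx.1)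
    _ = (∫ x, f x ∂μ).re := integral_re hf

theorem re_intervalIntegral {a b : ℝ} {f : ℝ → ℂ} (hf : IntervalIntegrable f volume a b) :
    (∫ x in a..b, f x).re = ∫ x in a..b, (f x).re :=
  (intervalIntegral.intervalIntegral_re hf).symm

theorem intervalIntegral_mem_diskCap_re {a b : ℝ} {f g : ℝ → ℂ} (hab : a ≤ b)
    (hf : IntervalIntegrable f volume a b) (hg : IntervalIntegrable g volume a b)
    (hfg : ∀ x ∈ Ioo a b, f x ∈ diskCap c (g x).re) :
    ∫ x in a..b, f x ∈ diskCap c (∫ x in a..b, g x).re := by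
  rw [re_intervalIntegral hg]
  rw [intervalIntegrable_iff_integrableOn_Ioo_of_le hab] at hf hg
  simp only [integral_of_le hab, integral_Ioc_eq_integral_Ioo]
  exact integral_mem_diskCap hf hg.re (ae_restrict_of_forall_mem measurableSet_Ioo hfg)

theorem cos_I_mul_re (y r : ℝ) :
    (Complex.cos (Complex.I * y * r)).re = Real.cosh (y * r) := by
  rw [mul_assoc, mul_comm, ← Complex.ofReal_mul, Complex.cos_mul_I, ← Complex.ofReal_cosh,
    Complex.ofReal_re]

theorem cos_add_mul_I_re (x y : ℝ) :
    (Complex.cos (x + y * Complex.I)).re = Real.cos x * Real.cosh y := by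
  simp [Complex.cos_add_mul_I, ← Complex.ofReal_cos, ← Complex.ofReal_cosh]

theorem norm_cos_add_mul_I_le (x y : ℝ) :
    ‖Complex.cos (x + y * Complex.I)‖ ≤ Real.cosh y := by
  have him : (Complex.cos (x + y * Complex.I)).im = -(Real.sin x * Real.sinh y) := by
    simp [Complex.cos_add_mul_I, ← Complex.ofReal_sin, ← Complex.ofReal_sinh,
      ← Complex.ofReal_cos, ← Complex.ofReal_cosh]
  rw [Complex.norm_eq_sqrt_sq_add_sq, cos_add_mul_I_re, him]
  refine Real.sqrt_le_iff.2 ⟨(Real.cosh_pos y).le, ?_⟩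
  calc (Real.cos x * Real.cosh y) ^ 2 + (-(Real.sin x * Real.sinh y)) ^ 2
      = Real.cosh y ^ 2 - Real.sin x ^ 2 := by
        linear_combination (Real.sinh y ^ 2 + 1) * Real.sin_sq_add_cos_sq x +
          (Real.cos x ^ 2 - 1) * Real.cosh_sq y
    _ ≤ Real.cosh y ^ 2 := sub_le_self _ (sq_nonneg _)

theorem cos_mul_mem_diskCap {lam r : ℝ} (hc : c ≤ Real.cos (lam * r)) (η : ℝ) :
    Complex.cos ((lam + Complex.I * η) * r) ∈ diskCap c (Complex.cos (Complex.I * η * r)).re := by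
  have hz : (lam + Complex.I * η) * r = ((lam * r : ℝ) : ℂ) + ((η * r : ℝ) : ℂ) * Complex.I := by
    push_cast; ring
  rw [cos_I_mul_re, hz]
  refine ⟨?_, norm_cos_add_mul_I_le _ _⟩
  rw [cos_add_mul_I_re]
  exact mul_le_mul_of_nonneg_right hc (Real.cosh_pos _).le

end DiskCap

section Kernel

theorem rpow_le_rpow_add_rpow {x y z : ℝ} (hx : 0 < x) (hxy : x ≤ y) (hyz : y ≤ z) (α : ℝ) :
    y ^ α ≤ x ^ α + z ^ α := by
  have hy : 0 < y := hx.trans_le hxy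
  rcases le_total 0 α with hα | hα
  · exact (Real.rpow_le_rpow hy.le hyz hα).trans
      (le_add_of_nonneg_left (Real.rpow_nonneg hx.le α))
  · exact (Real.rpow_le_rpow_of_nonpos hx hxy hα).trans
      (le_add_of_nonneg_right (Real.rpow_nonneg (hy.le.trans hyz) α))

theorem half_mul_sub_le_cosh_sub_cosh {r s : ℝ} (hr : 0 ≤ r) (hrs : r ≤ s) :
    s / 2 * (s - r) ≤ Real.cosh s - Real.cosh r := by
  have hadd : (s + r) / 2 ≤ Real.sinh ((s + r) / 2) := Real.self_le_sinh_iff.2 (by linarith)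
  have hsub : (s - r) / 2 ≤ Real.sinh ((s - r) / 2) := Real.self_le_sinh_iff.2 (by linarith)
  calc s / 2 * (s - r) ≤ 2 * ((s + r) / 2 * ((s - r) / 2)) := by
        nlinarith [mul_nonneg hr (sub_nonneg.2 hrs)]
    _ ≤ 2 * (Real.sinh ((s + r) / 2) * Real.sinh ((s - r) / 2)) := by
        gcongr; linarith
    _ = Real.cosh ((s + r) / 2 + (s - r) / 2) - Real.cosh ((s + r) / 2 - (s - r) / 2) := by
        rw [Real.cosh_add, Real.cosh_sub]; ring
    _ = Real.cosh s - Real.cosh r := by ring_nf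

theorem cosh_sub_cosh_pos {r s : ℝ} (hr : 0 ≤ r) (hrs : r < s) :
    0 < Real.cosh s - Real.cosh r := by
  rw [sub_pos, Real.cosh_lt_cosh, abs_of_nonneg hr, abs_of_nonneg (hr.trans hrs.le)]
  exact hrs

theorem cosh_sub_cosh_rpow_le {r s : ℝ} (hr : 0 ≤ r) (hrs : r < s) (α : ℝ) :
    (Real.cosh s - Real.cosh r) ^ α ≤ (s / 2) ^ α * (s - r) ^ α + Real.cosh s ^ α := by
  have hs : 0 < s / 2 := half_pos (hr.trans_lt hrs)
  rw [← Real.mul_rpow hs.le (sub_nonneg.2 hrs.le)]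
  exact rpow_le_rpow_add_rpow (mul_pos hs (sub_pos.2 hrs))
    (half_mul_sub_le_cosh_sub_cosh hr hrs.le) (sub_le_self _ (Real.cosh_pos r).le) α

variable {α s : ℝ}

theorem intervalIntegrable_sub_rpow (hα : -1 < α) (s : ℝ) :
    IntervalIntegrable (fun r => (s - r) ^ α) volume 0 s := by
  simpa using ((intervalIntegrable_rpow' hα (a := 0) (b := s)).comp_sub_left s).symm

theorem intervalIntegrable_cosh_sub_cosh_rpow (hα : -1 < α) (hs : 0 ≤ s) :
    IntervalIntegrable (fun r => (Real.cosh s - Real.cosh r) ^ α) volume 0 s := by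
  have hmaj : IntervalIntegrable (fun r => (s / 2) ^ α * (s - r) ^ α + Real.cosh s ^ α)
      volume 0 s := ((intervalIntegrable_sub_rpow hα s).const_mul _).add intervalIntegrable_const
  rw [intervalIntegrable_iff_integrableOn_Ioo_of_le hs] at hmaj ⊢
  refine hmaj.mono' (Measurable.aestronglyMeasurable (by fun_prop))
    (ae_restrict_of_forall_mem measurableSet_Ioo fun r hr => ?_)
  rw [Real.norm_of_nonneg (Real.rpow_nonneg (cosh_sub_cosh_pos hr.1.le hr.2).le α)]
  exact cosh_sub_cosh_rpow_le hr.1.le hr.2 α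

theorem integral_cosh_sub_cosh_rpow_le (hα : -1 < α) (hs : 0 < s) :
    ∫ r in (0 : ℝ)..s, (Real.cosh s - Real.cosh r) ^ α ≤
      (1 / 2) ^ α / (α + 1) * s ^ (2 * α + 1) + s * Real.cosh s ^ α := by
  have hint := (intervalIntegrable_sub_rpow hα s).const_mul ((s / 2) ^ α)
  calc ∫ r in (0 : ℝ)..s, (Real.cosh s - Real.cosh r) ^ α
      ≤ ∫ r in (0 : ℝ)..s, ((s / 2) ^ α * (s - r) ^ α + Real.cosh s ^ α) :=
        integral_mono_on_of_le_Ioo hs.le (intervalIntegrable_cosh_sub_cosh_rpow hα hs.le)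
          (hint.add intervalIntegrable_const) fun r hr => cosh_sub_cosh_rpow_le hr.1.le hr.2 α
    _ = (s / 2) ^ α * (s ^ (α + 1) / (α + 1)) + s * Real.cosh s ^ α := by
        rw [intervalIntegral.integral_add hint intervalIntegrable_const,
          intervalIntegral.integral_const_mul, integral_comp_sub_left (fun x => x ^ α),
          sub_self, sub_zero, integral_rpow (Or.inl hα), Real.zero_rpow (by linarith), sub_zero,
          intervalIntegral.integral_const, sub_zero, smul_eq_mul]
    _ = (1 / 2) ^ α / (α + 1) * s ^ (2 * α + 1) + s * Real.cosh s ^ α := by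
        have hpow : s ^ α * s ^ (α + 1) = s ^ (2 * α + 1) := by
          rw [← Real.rpow_add hs]; ring_nf
        rw [← hpow, div_eq_mul_one_div s, Real.mul_rpow hs.le one_half_pos.le]
        ring

end Kernel
section KoornwinderIntegrals

/-- The inner integral `∫₀ˢ (cosh s - cosh r)^α cos(zr) dr` of the Koornwinder formula; the
elementary spherical function has `α = m₁/2 - 1`. -/
noncomputable def koornwinderInner (α : ℝ) (z : ℂ) (s : ℝ) : ℂ :=
  ∫ r in (0 : ℝ)..s, (((Real.cosh s - Real.cosh r) ^ α : ℝ) : ℂ) * Complex.cos (z * r)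

/-- The outer integral of the Koornwinder formula, before normalisation; the elementary spherical
function has `α = m₁/2 - 1` and `β = m₂/2 - 1`. -/
noncomputable def koornwinderOuter (α β : ℝ) (z : ℂ) (t : ℝ) : ℂ :=
  ∫ s in (0 : ℝ)..t, (((Real.cosh (2 * t) - Real.cosh (2 * s)) ^ β : ℝ) : ℂ) *
    koornwinderInner α z s * ((Real.sinh s : ℝ) : ℂ)

variable {α β c lam η s t : ℝ}

theorem stronglyMeasurable_koornwinderInner (α : ℝ) (z : ℂ) :
    StronglyMeasurable (koornwinderInner α z) :=
  stronglyMeasurable_intervalIntegral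
    (F := fun s r : ℝ => (((Real.cosh s - Real.cosh r) ^ α : ℝ) : ℂ) * Complex.cos (z * r))
    (Measurable.stronglyMeasurable (by simp only [Function.uncurry_def]; fun_prop))
    measurable_const measurable_id

theorem stronglyMeasurable_koornwinderOuter (α β : ℝ) (z : ℂ) :
    StronglyMeasurable (koornwinderOuter α β z) := by
  have hinner := (stronglyMeasurable_koornwinderInner α z).measurable
  exact stronglyMeasurable_intervalIntegral
    (F := fun t s : ℝ => (((Real.cosh (2 * t) - Real.cosh (2 * s)) ^ β : ℝ) : ℂ) *
      koornwinderInner α z s * ((Real.sinh s : ℝ) : ℂ))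
    (Measurable.stronglyMeasurable (by simp only [Function.uncurry_def]; fun_prop))
    measurable_const measurable_id

theorem intervalIntegrable_koornwinderInner_integrand (hα : -1 < α) (z : ℂ) (hs : 0 ≤ s) :
    IntervalIntegrable
      (fun r : ℝ => (((Real.cosh s - Real.cosh r) ^ α : ℝ) : ℂ) * Complex.cos (z * r))
      volume 0 s := by
  have hkernel := intervalIntegrable_cosh_sub_cosh_rpow hα hs
  exact IntervalIntegrable.mul_continuousOn ⟨hkernel.1.ofReal, hkernel.2.ofReal⟩ (by fun_prop)

theorem exists_norm_koornwinderInner_le (hα : -(1 / 2) ≤ α) (z : ℂ) (t : ℝ) :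
    ∃ M, ∀ s ∈ Ioc 0 t, ‖koornwinderInner α z s‖ ≤ M := by
  obtain ⟨B, hB⟩ := isCompact_Icc.exists_bound_of_continuousOn
    (show ContinuousOn (fun r : ℝ => Complex.cos (z * r)) (Icc 0 t) by fun_prop)
  have hmajorant : ContinuousOn (fun s : ℝ => ((1 / 2) ^ α / (α + 1) * s ^ (2 * α + 1) +
      s * Real.cosh s ^ α) * B) (Icc 0 t) := by
    have hpow : Continuous fun s : ℝ => s ^ (2 * α + 1) :=
      Real.continuous_rpow_const (by linarith)
    have hcosh : Continuous fun s : ℝ => Real.cosh s ^ α :=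
      Real.continuous_cosh.rpow_const fun s => Or.inl (Real.cosh_pos s).ne'
    fun_prop
  obtain ⟨M, hM⟩ := isCompact_Icc.exists_bound_of_continuousOn hmajorant
  refine ⟨M, fun s hs => ?_⟩
  have hkernel := intervalIntegrable_cosh_sub_cosh_rpow (by linarith : -1 < α) hs.1.le
  have hB0 : 0 ≤ B := (norm_nonneg _).trans (hB s ⟨hs.1.le, hs.2⟩)
  calc ‖koornwinderInner α z s‖
      ≤ ∫ r in (0 : ℝ)..s, (Real.cosh s - Real.cosh r) ^ α * B := by
        refine intervalIntegral.norm_integral_le_of_norm_le hs.1.le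
          (ae_of_all _ fun r hr => ?_) (hkernel.mul_const B)
        have hnonneg : 0 ≤ Real.cosh s - Real.cosh r := sub_nonneg.2
          (Real.cosh_le_cosh.2 (abs_le_abs_of_nonneg hr.1.le hr.2))
        rw [norm_mul, Complex.norm_of_nonneg (Real.rpow_nonneg hnonneg α)]
        gcongr
        exact hB r ⟨hr.1.le, hr.2.trans hs.2⟩
    _ = (∫ r in (0 : ℝ)..s, (Real.cosh s - Real.cosh r) ^ α) * B :=
        intervalIntegral.integral_mul_const _ _
    _ ≤ ((1 / 2) ^ α / (α + 1) * s ^ (2 * α + 1) + s * Real.cosh s ^ α) * B := by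
        gcongr
        exact integral_cosh_sub_cosh_rpow_le (by linarith) hs.1
    _ ≤ M := (le_abs_self _).trans (hM s ⟨hs.1.le, hs.2⟩)

theorem intervalIntegrable_koornwinderOuter_integrand (hα : -(1 / 2) ≤ α) (hβ : -1 < β) (z : ℂ)
    (ht : 0 ≤ t) :
    IntervalIntegrable
      (fun s : ℝ => (((Real.cosh (2 * t) - Real.cosh (2 * s)) ^ β : ℝ) : ℂ) *
        koornwinderInner α z s * ((Real.sinh s : ℝ) : ℂ)) volume 0 t := by
  have hkernel : IntervalIntegrable
      (fun s => (Real.cosh (2 * t) - Real.cosh (2 * s)) ^ β) volume 0 t := by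
    simpa using (intervalIntegrable_cosh_sub_cosh_rpow hβ
      (by positivity : 0 ≤ 2 * t)).comp_mul_left (c := 2)
  obtain ⟨M, hM⟩ := exists_norm_koornwinderInner_le hα z t
  refine IntervalIntegrable.mul_continuousOn ?_ (by fun_prop)
  rw [intervalIntegrable_iff_integrableOn_Ioc_of_le ht] at hkernel ⊢
  exact hkernel.ofReal.mul_bdd (stronglyMeasurable_koornwinderInner α z).aestronglyMeasurable
    (ae_restrict_of_forall_mem measurableSet_Ioc hM)

theorem koornwinderInner_mem_diskCap (hα : -1 < α) (hs : 0 ≤ s)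
    (hc : ∀ r ∈ Ioo 0 s, c ≤ Real.cos (lam * r)) :
    koornwinderInner α (lam + Complex.I * η) s ∈
      diskCap c (koornwinderInner α (Complex.I * η) s).re := by
  refine intervalIntegral_mem_diskCap_re hs (intervalIntegrable_koornwinderInner_integrand hα _ hs)
    (intervalIntegrable_koornwinderInner_integrand hα _ hs) fun r hr => ?_
  rw [Complex.re_ofReal_mul]
  exact ofReal_mul_mem_diskCap (Real.rpow_nonneg (cosh_sub_cosh_pos hr.1.le hr.2).le α)
    (cos_mul_mem_diskCap (hc r hr) η)

theorem koornwinderOuter_mem_diskCap (hα : -(1 / 2) ≤ α) (hβ : -1 < β) (ht : 0 ≤ t)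
    (hc : ∀ r ∈ Ioo 0 t, c ≤ Real.cos (lam * r)) :
    koornwinderOuter α β (lam + Complex.I * η) t ∈
      diskCap c (koornwinderOuter α β (Complex.I * η) t).re := by
  refine intervalIntegral_mem_diskCap_re ht
    (intervalIntegrable_koornwinderOuter_integrand hα hβ _ ht)
    (intervalIntegrable_koornwinderOuter_integrand hα hβ _ ht) fun s hs => ?_
  have hkernel : 0 ≤ (Real.cosh (2 * t) - Real.cosh (2 * s)) ^ β := Real.rpow_nonneg
    (cosh_sub_cosh_pos (by linarith [hs.1]) (by linarith [hs.2])).le β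
  have hinner := koornwinderInner_mem_diskCap (α := α) (η := η) (by linarith) hs.1.le
    fun r hr => hc r ⟨hr.1, hr.2.trans hs.2⟩
  rw [mul_comm _ ((Real.sinh s : ℝ) : ℂ), mul_comm _ ((Real.sinh s : ℝ) : ℂ),
    Complex.re_ofReal_mul, Complex.re_ofReal_mul]
  exact ofReal_mul_mem_diskCap (Real.sinh_pos_iff.2 hs.1).le (ofReal_mul_mem_diskCap hkernel hinner)

theorem koornwinderInner_re_pos (hα : -1 < α) (η : ℝ) (hs : 0 < s) :
    0 < (koornwinderInner α (Complex.I * η) s).re := by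
  have hint := intervalIntegrable_koornwinderInner_integrand hα (Complex.I * η) hs.le
  rw [koornwinderInner, re_intervalIntegral hint]
  refine intervalIntegral_pos_of_pos_on ⟨hint.1.re, hint.2.re⟩ (fun r hr => ?_) hs
  rw [Complex.re_ofReal_mul, cos_I_mul_re]
  exact mul_pos (Real.rpow_pos_of_pos (cosh_sub_cosh_pos hr.1.le hr.2) α) (Real.cosh_pos _)

theorem koornwinderOuter_re_pos (hα : -(1 / 2) ≤ α) (hβ : -1 < β) (η : ℝ) (ht : 0 < t) :
    0 < (koornwinderOuter α β (Complex.I * η) t).re := by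
  have hint := intervalIntegrable_koornwinderOuter_integrand hα hβ (Complex.I * η) ht.le
  rw [koornwinderOuter, re_intervalIntegral hint]
  refine intervalIntegral_pos_of_pos_on ⟨hint.1.re, hint.2.re⟩ (fun s hs => ?_) ht
  have hkernel : 0 < (Real.cosh (2 * t) - Real.cosh (2 * s)) ^ β := Real.rpow_pos_of_pos
    (cosh_sub_cosh_pos (by linarith [hs.1]) (by linarith [hs.2])) β
  rw [Complex.re_mul_ofReal, Complex.re_ofReal_mul]
  exact mul_pos (mul_pos hkernel (koornwinderInner_re_pos (by linarith) η hs.1))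
    (Real.sinh_pos_iff.2 hs.1)

end KoornwinderIntegrals

section SphericalFunction

variable {m₁ m₂ : ℕ} {c lam η t : ℝ}

theorem PhiC_eq_mul_koornwinderOuter (m₁ m₂ : ℕ) (z : ℂ) (t : ℝ) :
    PhiC m₁ m₂ z t = ((c₀ m₁ m₂ * Real.sinh (2 * t) / Δ m₁ m₂ t : ℝ) : ℂ) *
      koornwinderOuter ((m₁ : ℝ) / 2 - 1) ((m₂ : ℝ) / 2 - 1) z t :=
  rfl

theorem measurable_Δ (m₁ m₂ : ℕ) : Measurable (Δ m₁ m₂) := by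
  unfold Δ
  fun_prop

theorem Δ_pos (m₁ m₂ : ℕ) (ht : 0 < t) : 0 < Δ m₁ m₂ t := by
  exact mul_pos (pow_pos (mul_pos two_pos (Real.sinh_pos_iff.2 ht)) _)
    (pow_pos (mul_pos two_pos (Real.cosh_pos t)) _)

theorem c₀_pos (hm₁ : 1 ≤ m₁) : 0 < c₀ m₁ m₂ := by
  have hm : (0 : ℝ) < m₁ + m₂ := by exact_mod_cast Nat.add_pos_left hm₁ m₂
  have hnum : 0 < Real.Gamma (((m₁ : ℝ) + m₂ + 1 - 1) / 2) :=
    Real.Gamma_pos_of_pos (by linarith)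
  have hden : 0 < Real.Gamma (((m₁ : ℝ) + m₂ + 1) / 2) := Real.Gamma_pos_of_pos (by linarith)
  exact div_pos (mul_pos (mul_pos (Real.sqrt_pos.2 Real.pi_pos)
    (Real.rpow_pos_of_pos two_pos _)) hnum) hden

theorem c₀_mul_sinh_div_Δ_pos (hm₁ : 1 ≤ m₁) (ht : 0 < t) :
    0 < c₀ m₁ m₂ * Real.sinh (2 * t) / Δ m₁ m₂ t :=
  div_pos (mul_pos (c₀_pos hm₁) (Real.sinh_pos_iff.2 (by positivity))) (Δ_pos m₁ m₂ ht)

theorem measurable_PhiC (m₁ m₂ : ℕ) (z : ℂ) : Measurable (PhiC m₁ m₂ z) := by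
  have hΔ := measurable_Δ m₁ m₂
  have houter := (stronglyMeasurable_koornwinderOuter
    ((m₁ : ℝ) / 2 - 1) ((m₂ : ℝ) / 2 - 1) z).measurable
  simp only [funext (PhiC_eq_mul_koornwinderOuter m₁ m₂ z)]
  fun_prop

theorem neg_half_le_half_sub_one {m : ℕ} (hm : 1 ≤ m) : -(1 / 2) ≤ (m : ℝ) / 2 - 1 := by
  have hm' : (1 : ℝ) ≤ m := by exact_mod_cast hm
  linarith

theorem PhiC_mem_diskCap (hm₁ : 1 ≤ m₁) (hm₂ : 1 ≤ m₂) (ht : 0 < t)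
    (hc : ∀ r ∈ Ioo 0 t, c ≤ Real.cos (lam * r)) :
    PhiC m₁ m₂ (lam + Complex.I * η) t ∈ diskCap c (PhiC m₁ m₂ (Complex.I * η) t).re := by
  simp only [PhiC_eq_mul_koornwinderOuter, Complex.re_ofReal_mul]
  exact ofReal_mul_mem_diskCap (c₀_mul_sinh_div_Δ_pos hm₁ ht).le
    (koornwinderOuter_mem_diskCap (neg_half_le_half_sub_one hm₁)
      (by linarith [neg_half_le_half_sub_one hm₂]) ht.le hc)

theorem PhiC_re_pos (hm₁ : 1 ≤ m₁) (hm₂ : 1 ≤ m₂) (η : ℝ) (ht : 0 < t) :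
    0 < (PhiC m₁ m₂ (Complex.I * η) t).re := by
  rw [PhiC_eq_mul_koornwinderOuter, Complex.re_ofReal_mul]
  exact mul_pos (c₀_mul_sinh_div_Δ_pos hm₁ ht)
    (koornwinderOuter_re_pos (neg_half_le_half_sub_one hm₁)
      (by linarith [neg_half_le_half_sub_one hm₂]) η ht)

end SphericalFunction

section TestFunction

variable {X : Type*} {v P : X → ℝ} {T : Set X} {p p' κ : ℝ}

/-- The density `v^{-p'} P^β` integrated in the conclusion, with `β = κp` and `β = κ + 1`. -/
noncomputable def dualDensity (v P : X → ℝ) (p' β : ℝ) (x : X) : ℝ≥0∞ :=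
  ENNReal.ofReal (v x) ^ (-p') * ENNReal.ofReal (P x) ^ β

/-- The extremising function `v^{-p'} P^κ` of the Hölder duality, cut off to `T`. -/
noncomputable def testFunction (v P : X → ℝ) (p' κ : ℝ) (T : Set X) : X → ℝ :=
  T.indicator fun x => v x ^ (-p') * P x ^ κ

theorem testFunction_of_notMem {x : X} (hx : x ∉ T) : testFunction v P p' κ T x = 0 :=
  indicator_of_notMem hx _

theorem testFunction_nonneg (hv : ∀ x ∈ T, 0 < v x) (hP : ∀ x ∈ T, 0 < P x) (x : X) :
    0 ≤ testFunction v P p' κ T x :=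
  indicator_nonneg (fun x hx => mul_nonneg (Real.rpow_nonneg (hv x hx).le _)
    (Real.rpow_nonneg (hP x hx).le _)) x

theorem ofReal_mul_testFunction_rpow (hpp' : p.HolderConjugate p') (hv : ∀ x ∈ T, 0 < v x)
    (hP : ∀ x ∈ T, 0 < P x) (x : X) :
    ENNReal.ofReal (v x * testFunction v P p' κ T x) ^ p =
      T.indicator (dualDensity v P p' (κ * p)) x := by
  by_cases hx : x ∈ T
  · have hvx := hv x hx
    have hPx := hP x hx
    have hexp : (1 + -p') * p = -p' := by linear_combination -hpp'.mul_eq_add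
    have hreal : v x * (v x ^ (-p') * P x ^ κ) = v x ^ (1 + -p') * P x ^ κ := by
      rw [Real.rpow_add hvx, Real.rpow_one, mul_assoc]
    rw [testFunction, indicator_of_mem hx, indicator_of_mem hx, hreal,
      ENNReal.ofReal_mul (Real.rpow_nonneg hvx.le _), ← ENNReal.ofReal_rpow_of_pos hvx,
      ← ENNReal.ofReal_rpow_of_pos hPx, ENNReal.mul_rpow_of_nonneg _ _ hpp'.nonneg,
      ← ENNReal.rpow_mul, ← ENNReal.rpow_mul, hexp, dualDensity]
  · rw [testFunction_of_notMem hx, indicator_of_notMem hx, mul_zero, ENNReal.ofReal_zero,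
      ENNReal.zero_rpow_of_pos hpp'.pos]

theorem ofReal_testFunction_mul (hv : ∀ x ∈ T, 0 < v x) (hP : ∀ x ∈ T, 0 < P x) (x : X) :
    ENNReal.ofReal (testFunction v P p' κ T x * P x) =
      T.indicator (dualDensity v P p' (κ + 1)) x := by
  by_cases hx : x ∈ T
  · have hvx := hv x hx
    have hPx := hP x hx
    rw [testFunction, indicator_of_mem hx, indicator_of_mem hx, dualDensity, mul_assoc,
      ← Real.rpow_add_one hPx.ne', ENNReal.ofReal_rpow_of_pos hvx, ENNReal.ofReal_rpow_of_pos hPx,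
      ENNReal.ofReal_mul (Real.rpow_nonneg hvx.le _)]
  · rw [testFunction_of_notMem hx, indicator_of_notMem hx, zero_mul, ENNReal.ofReal_zero]

theorem testFunction_mul_nonneg (hv : ∀ x ∈ T, 0 < v x) (hP : ∀ x ∈ T, 0 < P x) (x : X) :
    0 ≤ testFunction v P p' κ T x * P x := by
  by_cases hx : x ∈ T
  · exact mul_nonneg (testFunction_nonneg hv hP x) (hP x hx).le
  · rw [testFunction_of_notMem hx, zero_mul]

theorem dualDensity_le_mul {β β' : ℝ} {x : X} {N : ℕ} (hP : 0 < P x)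
    (hN : P x ^ (β' - β) ≤ N) : dualDensity v P p' β' x ≤ N * dualDensity v P p' β x := by
  have hsplit : ENNReal.ofReal (P x) ^ β' =
      ENNReal.ofReal (P x ^ (β' - β)) * ENNReal.ofReal (P x) ^ β := by
    rw [← ENNReal.ofReal_rpow_of_pos hP, ← ENNReal.rpow_add _ _ (ENNReal.ofReal_pos.2 hP).ne'
      ENNReal.ofReal_ne_top, sub_add_cancel]
  rw [dualDensity, dualDensity, hsplit, mul_left_comm]
  gcongr
  exact ENNReal.ofReal_le_natCast.2 hN

end TestFunction

section WeightedTransform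

variable {X Y : Type*} [MeasurableSpace X] [MeasurableSpace Y] {μ : Measure X} {ν : Measure Y}
  {K : Y → X → ℂ} {P v : X → ℝ} {w : Y → ℝ≥0∞} {S T : Set X} {L : Set Y} {p p' q κ c : ℝ}
  {C : ℝ≥0∞}

/-- The weighted `Lᵖ`-`L^q` inequality for the transform `f ↦ ∫ f K(y, ·) dμ`, tested on
nonnegative `f` supported in `S` that are integrable against the majorant `P` of the kernel.
The weight `w` on the transform side is not raised to the power `q`. -/
def WeightedTransformInequality (μ : Measure X) (ν : Measure Y) (K : Y → X → ℂ) (P v : X → ℝ)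
    (w : Y → ℝ≥0∞) (S : Set X) (p q : ℝ) (C : ℝ≥0∞) : Prop :=
  ∀ f : X → ℝ, Measurable f → (∀ x, 0 ≤ f x) → (∀ x ∉ S, f x = 0) →
    ∫⁻ x, ENNReal.ofReal (v x * f x) ^ p ∂μ < ⊤ → Integrable (fun x => f x * P x) μ →
    (∫⁻ y, w y * ‖∫ x, f x * K y x ∂μ‖ₑ ^ q ∂ν) ^ (1 / q) ≤
      C * (∫⁻ x, ENNReal.ofReal (v x * f x) ^ p ∂μ) ^ (1 / p)

theorem measurable_testFunction (hv : Measurable v) (hP : Measurable P) (hT : MeasurableSet T) :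
    Measurable (testFunction v P p' κ T) :=
  Measurable.indicator (by fun_prop) hT

theorem lintegral_ofReal_mul_testFunction_rpow (hpp' : p.HolderConjugate p')
    (hT : MeasurableSet T) (hv : ∀ x ∈ T, 0 < v x) (hP : ∀ x ∈ T, 0 < P x) :
    ∫⁻ x, ENNReal.ofReal (v x * testFunction v P p' κ T x) ^ p ∂μ =
      ∫⁻ x in T, dualDensity v P p' (κ * p) x ∂μ := by
  simp only [ofReal_mul_testFunction_rpow hpp' hv hP, lintegral_indicator hT]

theorem lintegral_ofReal_testFunction_mul (hT : MeasurableSet T) (hv : ∀ x ∈ T, 0 < v x)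
    (hP : ∀ x ∈ T, 0 < P x) :
    ∫⁻ x, ENNReal.ofReal (testFunction v P p' κ T x * P x) ∂μ =
      ∫⁻ x in T, dualDensity v P p' (κ + 1) x ∂μ := by
  simp only [ofReal_testFunction_mul hv hP, lintegral_indicator hT]

theorem integrable_testFunction_mul (hT : MeasurableSet T) (hvm : Measurable v)
    (hPm : Measurable P) (hv : ∀ x ∈ T, 0 < v x) (hP : ∀ x ∈ T, 0 < P x)
    (hD : ∫⁻ x in T, dualDensity v P p' (κ + 1) x ∂μ ≠ ⊤) :
    Integrable (fun x => testFunction v P p' κ T x * P x) μ := by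
  have hfm : Measurable (testFunction v P p' κ T) := measurable_testFunction hvm hPm hT
  refine (lintegral_ofReal_ne_top_iff_integrable
    (Measurable.aestronglyMeasurable (by fun_prop))
    (ae_of_all _ (testFunction_mul_nonneg hv hP))).1 ?_
  rwa [lintegral_ofReal_testFunction_mul hT hv hP]

theorem setLIntegral_eq_iSup_inter_le (S : Set X) (F : X → ℝ≥0∞) (g : X → ℝ) :
    ∫⁻ x in S, F x ∂μ = ⨆ N : ℕ, ∫⁻ x in S ∩ {x | g x ≤ N}, F x ∂μ := by
  have hmono : Monotone fun N : ℕ => S ∩ {x | g x ≤ N} := fun M N hMN =>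
    inter_subset_inter_right S (ofPred_subset_ofPred.2 fun _ hx => hx.trans (Nat.cast_le.2 hMN))
  have hunion : ⋃ N : ℕ, S ∩ {x | g x ≤ N} = S := by
    rw [← inter_iUnion, inter_eq_left]
    exact fun x _ => mem_iUnion.2 (exists_nat_ge (g x))
  rw [← setLIntegral_iUnion_of_directed F hmono.directed_le, hunion]

theorem setLIntegral_dualDensity_inter_ne_top {β : ℝ} (hS : MeasurableSet S) (hPm : Measurable P)
    (hP : ∀ x ∈ S, 0 < P x) (hβ : ∫⁻ x in S, dualDensity v P p' β x ∂μ ≠ ⊤) (β' : ℝ) (N : ℕ) :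
    ∫⁻ x in S ∩ {x | P x ^ (β' - β) ≤ N}, dualDensity v P p' β' x ∂μ ≠ ⊤ := by
  refine ne_top_of_le_ne_top (ENNReal.mul_ne_top (ENNReal.natCast_ne_top N) hβ) ?_
  calc ∫⁻ x in S ∩ {x | P x ^ (β' - β) ≤ N}, dualDensity v P p' β' x ∂μ
      ≤ ∫⁻ x in S ∩ {x | P x ^ (β' - β) ≤ N}, N * dualDensity v P p' β x ∂μ :=
        setLIntegral_mono' (hS.inter (measurableSet_le (by fun_prop) measurable_const))
          fun x hx => dualDensity_le_mul (hP x hx.1) hx.2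
    _ ≤ ∫⁻ x in S, N * dualDensity v P p' β x ∂μ := lintegral_mono_set inter_subset_left
    _ = N * ∫⁻ x in S, dualDensity v P p' β x ∂μ :=
        lintegral_const_mul' _ _ (ENNReal.natCast_ne_top N)

theorem mul_setLIntegral_dualDensity_le_enorm_integral {K : X → ℂ} (hT : MeasurableSet T)
    (hvm : Measurable v) (hPm : Measurable P) (hKm : Measurable K) (hv : ∀ x ∈ T, 0 < v x)
    (hP : ∀ x ∈ T, 0 < P x) (hK : ∀ x ∈ T, K x ∈ diskCap c (P x)) (hc : 0 ≤ c)
    (hD : ∫⁻ x in T, dualDensity v P p' (κ + 1) x ∂μ ≠ ⊤) :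
    ENNReal.ofReal c * ∫⁻ x in T, dualDensity v P p' (κ + 1) x ∂μ ≤
      ‖∫ x, testFunction v P p' κ T x * K x ∂μ‖ₑ := by
  have hfP : Integrable (fun x => testFunction v P p' κ T x * P x) μ :=
    integrable_testFunction_mul hT hvm hPm hv hP hD
  have hmem : ∀ x, testFunction v P p' κ T x * K x ∈
      diskCap c (testFunction v P p' κ T x * P x) := by
    intro x
    by_cases hx : x ∈ T
    · exact ofReal_mul_mem_diskCap (testFunction_nonneg hv hP x) (hK x hx)
    · simp [testFunction_of_notMem hx, diskCap]
  have hfm : Measurable (testFunction v P p' κ T) := measurable_testFunction hvm hPm hT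
  have hfK : Integrable (fun x => testFunction v P p' κ T x * K x) μ :=
    hfP.mono' (Measurable.aestronglyMeasurable (by fun_prop)) (ae_of_all _ fun x => (hmem x).2)
  have hre := (integral_mem_diskCap hfK hfP (ae_of_all _ hmem)).1
  rw [← lintegral_ofReal_testFunction_mul hT hv hP, ← ofReal_integral_eq_lintegral_ofReal hfP
    (ae_of_all _ (testFunction_mul_nonneg hv hP)), ← ENNReal.ofReal_mul hc, ← ofReal_norm]
  exact ENNReal.ofReal_le_ofReal (hre.trans (Complex.re_le_norm _))

namespace WeightedTransformInequality

theorem mono {S' : Set X} (hS : S' ⊆ S) (h : WeightedTransformInequality μ ν K P v w S p q C) :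
    WeightedTransformInequality μ ν K P v w S' p q C :=
  fun f hf hf0 hfS => h f hf hf0 fun x hx => hfS x (mt (@hS x) hx)

theorem setLIntegral_mul_le_of_ne_top (h : WeightedTransformInequality μ ν K P v w T p q C)
    (hpp' : p.HolderConjugate p') (hq : 0 < q) (hc : 0 ≤ c) (hT : MeasurableSet T)
    (hL : MeasurableSet L) (hvm : Measurable v) (hPm : Measurable P) (hKm : ∀ y, Measurable (K y))
    (hv : ∀ x ∈ T, 0 < v x) (hP : ∀ x ∈ T, 0 < P x)
    (hK : ∀ y ∈ L, ∀ x ∈ T, K y x ∈ diskCap c (P x))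
    (hA : ∫⁻ x in T, dualDensity v P p' (κ * p) x ∂μ ≠ ⊤)
    (hD : ∫⁻ x in T, dualDensity v P p' (κ + 1) x ∂μ ≠ ⊤) :
    ENNReal.ofReal c * (∫⁻ y in L, w y ∂ν) ^ (1 / q) *
        ∫⁻ x in T, dualDensity v P p' (κ + 1) x ∂μ ≤
      C * (∫⁻ x in T, dualDensity v P p' (κ * p) x ∂μ) ^ (1 / p) := by
  let f := testFunction v P p' κ T
  set D := ∫⁻ x in T, dualDensity v P p' (κ + 1) x ∂μ
  have hA' := lintegral_ofReal_mul_testFunction_rpow (μ := μ) (κ := κ) hpp' hT hv hP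
  calc ENNReal.ofReal c * (∫⁻ y in L, w y ∂ν) ^ (1 / q) * D
      = (∫⁻ y in L, w y ∂ν) ^ (1 / q) * ((ENNReal.ofReal c * D) ^ q) ^ (1 / q) := by
        rw [one_div, ENNReal.rpow_rpow_inv hq.ne']; ring
    _ = (∫⁻ y in L, w y * (ENNReal.ofReal c * D) ^ q ∂ν) ^ (1 / q) := by
        rw [lintegral_mul_const' _ _ (ENNReal.rpow_ne_top_of_nonneg hq.le
          (ENNReal.mul_ne_top ENNReal.ofReal_ne_top hD)),
          ENNReal.mul_rpow_of_nonneg _ _ (one_div_nonneg.2 hq.le)]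
    _ ≤ (∫⁻ y in L, w y * ‖∫ x, f x * K y x ∂μ‖ₑ ^ q ∂ν) ^ (1 / q) := by
        gcongr ?_ ^ _
        refine setLIntegral_mono' hL fun y hy => ?_
        gcongr
        exact mul_setLIntegral_dualDensity_le_enorm_integral hT hvm hPm (hKm y) hv hP (hK y hy)
          hc hD
    _ ≤ (∫⁻ y, w y * ‖∫ x, f x * K y x ∂μ‖ₑ ^ q ∂ν) ^ (1 / q) := by
        gcongr
        exact Measure.restrict_le_self
    _ ≤ C * (∫⁻ x in T, dualDensity v P p' (κ * p) x ∂μ) ^ (1 / p) := by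
        rw [← hA']
        exact h f (measurable_testFunction hvm hPm hT) (testFunction_nonneg hv hP)
          (fun x hx => testFunction_of_notMem hx) (hA' ▸ hA.lt_top)
          (integrable_testFunction_mul hT hvm hPm hv hP hD)

theorem setLIntegral_mul_le (h : WeightedTransformInequality μ ν K P v w S p q C)
    (hpp' : p.HolderConjugate p') (hq : 0 < q) (hc : 0 < c) (hC : C ≠ 0) (hS : MeasurableSet S)
    (hL : MeasurableSet L) (hvm : Measurable v) (hPm : Measurable P) (hKm : ∀ y, Measurable (K y))
    (hv : ∀ x ∈ S, 0 < v x) (hP : ∀ x ∈ S, 0 < P x)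
    (hK : ∀ y ∈ L, ∀ x ∈ S, K y x ∈ diskCap c (P x)) (κ : ℝ) :
    (∫⁻ y in L, w y ∂ν) ^ (1 / q) * ∫⁻ x in S, dualDensity v P p' (κ + 1) x ∂μ ≤
      C / ENNReal.ofReal c * (∫⁻ x in S, dualDensity v P p' (κ * p) x ∂μ) ^ (1 / p) := by
  have hc' : ENNReal.ofReal c ≠ 0 := (ENNReal.ofReal_pos.2 hc).ne'
  rw [ENNReal.mul_comm_div, ← mul_div_assoc, ENNReal.le_div_iff_mul_le
    (Or.inl hc') (Or.inl ENNReal.ofReal_ne_top), mul_comm, ← mul_assoc]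
  rcases eq_or_ne (∫⁻ x in S, dualDensity v P p' (κ * p) x ∂μ) ⊤ with hA | hA
  · rw [hA, ENNReal.top_rpow_of_pos (one_div_pos.2 hpp'.pos), ENNReal.mul_top hC]
    exact le_top
  -- The left-hand integral may be infinite, and then the test function on `S` is inadmissible;
  -- exhaust `S` by sets on which the two densities are comparable.
  rw [setLIntegral_eq_iSup_inter_le S _ fun x => P x ^ (κ + 1 - κ * p), ENNReal.mul_iSup]
  refine iSup_le fun N => ?_
  have hTS : S ∩ {x | P x ^ (κ + 1 - κ * p) ≤ (N : ℝ)} ⊆ S := inter_subset_left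
  have hAT := lintegral_mono_set (μ := μ) (f := dualDensity v P p' (κ * p)) hTS
  calc _ ≤ C * (∫⁻ x in S ∩ {x | P x ^ (κ + 1 - κ * p) ≤ (N : ℝ)},
        dualDensity v P p' (κ * p) x ∂μ) ^ (1 / p) :=
        (h.mono hTS).setLIntegral_mul_le_of_ne_top hpp' hq hc.le
          (hS.inter (measurableSet_le (by fun_prop) measurable_const)) hL hvm hPm hKm
          (fun x hx => hv x (hTS hx)) (fun x hx => hP x (hTS hx))
          (fun y hy x hx => hK y hy x (hTS hx)) (ne_top_of_le_ne_top hA hAT)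
          (setLIntegral_dualDensity_inter_ne_top hS hPm hP hA _ N)
    _ ≤ C * (∫⁻ x in S, dualDensity v P p' (κ * p) x ∂μ) ^ (1 / p) := by
        gcongr
        exact one_div_nonneg.2 hpp'.nonneg

end WeightedTransformInequality

end WeightedTransform

section RadialMeasure

/-- The measure `Δ(t) dt` on `(0, ∞)`, the radial part of the invariant measure of the symmetric
space. -/
noncomputable def radialMeasure (m₁ m₂ : ℕ) : Measure ℝ :=
  (volume.restrict (Ioi 0)).withDensity fun t => ENNReal.ofReal (Δ m₁ m₂ t)

variable {m₁ m₂ : ℕ}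

theorem measurable_ofReal_Δ (m₁ m₂ : ℕ) : Measurable fun t => ENNReal.ofReal (Δ m₁ m₂ t) :=
  (measurable_Δ m₁ m₂).ennreal_ofReal

theorem lintegral_radialMeasure (F : ℝ → ℝ≥0∞) :
    ∫⁻ t, F t ∂radialMeasure m₁ m₂ = ∫⁻ t in Ioi 0, F t * ENNReal.ofReal (Δ m₁ m₂ t) := by
  rw [radialMeasure, lintegral_withDensity_eq_lintegral_mul_non_measurable _
    (measurable_ofReal_Δ m₁ m₂) (ae_of_all _ fun _ => ENNReal.ofReal_lt_top)]
  simp only [Pi.mul_apply, mul_comm]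

theorem setLIntegral_radialMeasure {T : Set ℝ} (hT : MeasurableSet T) (hT0 : T ⊆ Ioi 0)
    (F : ℝ → ℝ≥0∞) :
    ∫⁻ t in T, F t ∂radialMeasure m₁ m₂ = ∫⁻ t in T, F t * ENNReal.ofReal (Δ m₁ m₂ t) := by
  rw [radialMeasure, restrict_withDensity hT, Measure.restrict_restrict_of_subset hT0,
    lintegral_withDensity_eq_lintegral_mul_non_measurable _
      (measurable_ofReal_Δ m₁ m₂) (ae_of_all _ fun _ => ENNReal.ofReal_lt_top)]
  simp only [Pi.mul_apply, mul_comm]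

theorem integral_radialMeasure (F : ℝ → ℂ) :
    ∫ t, F t ∂radialMeasure m₁ m₂ = ∫ t in Ioi 0, F t * (Δ m₁ m₂ t : ℝ) := by
  rw [radialMeasure, integral_withDensity_eq_integral_toReal_smul (measurable_ofReal_Δ m₁ m₂)
    (ae_of_all _ fun _ => ENNReal.ofReal_lt_top)]
  refine setIntegral_congr_fun measurableSet_Ioi fun t ht => ?_
  simp only [ENNReal.toReal_ofReal (Δ_pos m₁ m₂ ht).le, Complex.real_smul, mul_comm]

theorem integrable_radialMeasure_iff {F : ℝ → ℝ} :
    Integrable F (radialMeasure m₁ m₂) ↔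
      Integrable (fun t => F t * Δ m₁ m₂ t) (volume.restrict (Ioi 0)) := by
  rw [radialMeasure, integrable_withDensity_iff_integrable_smul' (measurable_ofReal_Δ m₁ m₂)
    (ae_of_all _ fun _ => ENNReal.ofReal_lt_top)]
  refine integrable_congr (ae_restrict_of_forall_mem measurableSet_Ioi fun t ht => ?_)
  simp only [ENNReal.toReal_ofReal (Δ_pos m₁ m₂ ht).le, smul_eq_mul, mul_comm]

end RadialMeasure

section PittInequality

theorem le_cos_mul {θ₀ lam r s : ℝ} (hθ₀ : θ₀ ≤ Real.pi) (hs : 0 < s)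
    (hlam : lam ∈ Ioo 0 (θ₀ / s)) (hr : r ∈ Ioo 0 s) : Real.cos θ₀ ≤ Real.cos (lam * r) := by
  refine Real.cos_le_cos_of_nonneg_of_le_pi (mul_pos hlam.1 hr.1).le hθ₀ ?_
  calc lam * r ≤ lam * s := mul_le_mul_of_nonneg_left hr.2.le hlam.1.le
    _ ≤ θ₀ := ((lt_div_iff₀ hs).1 hlam.2).le

theorem mul_rpow_neg_mul_le {a A D M : ℝ≥0∞} {e : ℝ} (h : a * D ≤ M * A ^ e) :
    a * A ^ (-e) * D ≤ M := by
  rw [mul_right_comm, ENNReal.rpow_neg, ← div_eq_mul_inv]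
  exact ENNReal.div_le_of_le_mul h

theorem stmt8_general (m₁ m₂ : ℕ) (hm₁ : 1 ≤ m₁) (hm₂ : 1 ≤ m₂) (η : ℝ)
    (p q p' : ℝ) (hpp' : p.HolderConjugate p') (hq : 0 < q)
    (u : ℝ → ℝ≥0∞) (v : ℝ → ℝ) (hv : Measurable v) (hv0 : ∀ t ∈ Ioi (0 : ℝ), 0 < v t)
    (C : ℝ) (hC : 0 < C)
    (hPitt : ∀ f : ℝ → ℝ, Measurable f → (∀ t, 0 ≤ f t) →
      (∃ R : ℝ, ∀ t, R ≤ t → f t = 0) →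
      (∫⁻ t in Ioi (0 : ℝ),
          ENNReal.ofReal (v t * f t) ^ p * ENNReal.ofReal (Δ m₁ m₂ t)) < ⊤ →
      Integrable (fun t => f t * (PhiC m₁ m₂ (Complex.I * η) t).re * Δ m₁ m₂ t)
        (volume.restrict (Ioi 0)) →
      (∫⁻ lam : ℝ,
          u lam ^ q *
            (‖∫ t in Ioi (0 : ℝ),
                (f t : ℂ) * PhiC m₁ m₂ (lam + Complex.I * η) t * (Δ m₁ m₂ t : ℝ)‖₊ : ℝ≥0∞) ^ q *
            ENNReal.ofReal (densHC m₁ m₂ lam)) ^ (1 / q)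
        ≤ ENNReal.ofReal C *
          (∫⁻ t in Ioi (0 : ℝ),
            ENNReal.ofReal (v t * f t) ^ p * ENNReal.ofReal (Δ m₁ m₂ t)) ^ (1 / p))
    (κ θ₀ : ℝ) (hθ₀ : 0 < θ₀) (hθ₀' : θ₀ < Real.pi / 2) (s : ℝ) (hs : 0 < s) :
    (∫⁻ lam in Ioo (0 : ℝ) (θ₀ / s),
        u lam ^ q * ENNReal.ofReal (densHC m₁ m₂ lam)) ^ (1 / q) *
      (∫⁻ t in Ioo (0 : ℝ) s,
        ENNReal.ofReal (v t) ^ (-p') *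
          ENNReal.ofReal ((PhiC m₁ m₂ (Complex.I * η) t).re) ^ (κ + 1) *
          ENNReal.ofReal (Δ m₁ m₂ t)) ≤
      ENNReal.ofReal (C / Real.cos θ₀) *
        (∫⁻ t in Ioo (0 : ℝ) s,
          ENNReal.ofReal (v t) ^ (-p') *
            ENNReal.ofReal ((PhiC m₁ m₂ (Complex.I * η) t).re) ^ (κ * p) *
            ENNReal.ofReal (Δ m₁ m₂ t)) ^ (1 / p) := by
  have hcos : 0 < Real.cos θ₀ := Real.cos_pos_of_mem_Ioo ⟨by linarith, hθ₀'⟩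
  have hweighted : WeightedTransformInequality (radialMeasure m₁ m₂) volume
      (fun lam : ℝ => PhiC m₁ m₂ (lam + Complex.I * η))
      (fun t => (PhiC m₁ m₂ (Complex.I * η) t).re) v
      (fun lam => u lam ^ q * ENNReal.ofReal (densHC m₁ m₂ lam)) (Ioo 0 s) p q
      (ENNReal.ofReal C) := by
    intro f hf hf0 hfs hfp hfP
    rw [lintegral_radialMeasure] at hfp ⊢
    simp only [integral_radialMeasure, mul_right_comm (_ ^ q) (ENNReal.ofReal _)]
    exact hPitt f hf hf0 ⟨s, fun t ht => hfs t fun h => h.2.not_ge ht⟩ hfp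
      (integrable_radialMeasure_iff.1 hfP)
  have hmain := hweighted.setLIntegral_mul_le hpp' hq hcos (ENNReal.ofReal_pos.2 hC).ne'
    measurableSet_Ioo (measurableSet_Ioo (a := 0) (b := θ₀ / s)) hv
    (Complex.measurable_re.comp (measurable_PhiC m₁ m₂ _)) (fun lam => measurable_PhiC m₁ m₂ _)
    (fun t ht => hv0 t ht.1) (fun t ht => PhiC_re_pos hm₁ hm₂ η ht.1)
    (fun lam hlam t ht => PhiC_mem_diskCap hm₁ hm₂ ht.1 fun r hr =>
      le_cos_mul (by linarith) hs hlam ⟨hr.1, hr.2.trans ht.2⟩) κ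
  simp only [setLIntegral_radialMeasure measurableSet_Ioo Ioo_subset_Ioi_self, dualDensity]
    at hmain
  rwa [ENNReal.ofReal_div_of_pos hcos]

end PittInequality

/-- general necessary condition for Pitt's inequality, radial form. -/
theorem stmt8 (m₁ m₂ : ℕ) (hm₁ : 1 ≤ m₁) (hm₂ : 1 ≤ m₂)
    (q₀ : ENNReal) (hq₀ : 1 ≤ q₀)
    (p q p' : ℝ) (hp : 1 < p) (hq : 1 < q) (hp'def : p' = p / (p - 1))
    (u : ℝ → ℝ) (v : ℝ → ℝ) (hu : Measurable u) (hv : Measurable v)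
    (hu0 : ∀ lam, 0 ≤ u lam) (hv0 : ∀ t ∈ Ioi (0:ℝ), 0 < v t)
    (huloc : ∀ R : ℝ, 0 < R →
      (∫⁻ lam in Icc (-R) R,
        ENNReal.ofReal (u lam) ^ q * ENNReal.ofReal (densHC m₁ m₂ lam)) < ⊤)
    (hvloc : ∀ R : ℝ, 0 < R →
      (∫⁻ t in Ioc (0:ℝ) R,
        ENNReal.ofReal (v t) ^ (-p') * ENNReal.ofReal (Δ m₁ m₂ t)) < ⊤)
    (C : ℝ) (hC : 0 < C)
    (hPitt : ∀ f : ℝ → ℝ, Measurable f → (∀ t, 0 ≤ f t) →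
      (∃ R : ℝ, ∀ t, R ≤ t → f t = 0) →
      (∫⁻ t in Ioi (0:ℝ),
          ENNReal.ofReal (v t * f t) ^ p * ENNReal.ofReal (Δ m₁ m₂ t)) < ⊤ →
      Integrable
        (fun t => f t * (PhiC m₁ m₂ (Complex.I * (rhoP m₁ m₂ q₀ : ℝ)) t).re * Δ m₁ m₂ t)
        (volume.restrict (Ioi 0)) →
      (∫⁻ lam : ℝ,
          ENNReal.ofReal (u lam) ^ q *
            (‖∫ t in Ioi (0:ℝ),
                (f t : ℂ) * PhiC m₁ m₂ ((lam : ℂ) + Complex.I * (rhoP m₁ m₂ q₀ : ℝ)) t *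
                  (Δ m₁ m₂ t : ℝ)‖₊ : ℝ≥0∞) ^ q *
            ENNReal.ofReal (densHC m₁ m₂ lam)) ^ (1/q)
        ≤ ENNReal.ofReal C *
          (∫⁻ t in Ioi (0:ℝ),
            ENNReal.ofReal (v t * f t) ^ p * ENNReal.ofReal (Δ m₁ m₂ t)) ^ (1/p)) :
    ∀ κ : ℝ, ∀ θ₀ : ℝ, 0 < θ₀ → θ₀ < Real.pi / 2 →
      ∃ M : ℝ, ∀ s : ℝ, 0 < s →
        (∫⁻ lam in Ioo (0:ℝ) (θ₀/s),
            ENNReal.ofReal (u lam) ^ q * ENNReal.ofReal (densHC m₁ m₂ lam)) ^ (1/q) *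
        (∫⁻ t in Ioo (0:ℝ) s,
            ENNReal.ofReal (v t) ^ (-p') *
              ENNReal.ofReal ((PhiC m₁ m₂ (Complex.I * (rhoP m₁ m₂ q₀ : ℝ)) t).re) ^ (κ * p) *
              ENNReal.ofReal (Δ m₁ m₂ t)) ^ (-(1/p)) *
        (∫⁻ t in Ioo (0:ℝ) s,
            ENNReal.ofReal (v t) ^ (-p') *
              ENNReal.ofReal ((PhiC m₁ m₂ (Complex.I * (rhoP m₁ m₂ q₀ : ℝ)) t).re) ^ (κ + 1) *
              ENNReal.ofReal (Δ m₁ m₂ t))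
          ≤ ENNReal.ofReal M := by
  intro κ θ₀ h0 h1
  exact ⟨C / Real.cos θ₀, fun s hs => mul_rpow_neg_mul_le
    (stmt8_general m₁ m₂ hm₁ hm₂ _ p q p' ((Real.holderConjugate_iff_eq_conjExponent hp).2 hp'def)
      (by linarith) _ v hv hv0 C hC hPitt κ θ₀ h0 h1 s hs)⟩
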